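/- arXiv:2311.02811 — 5 statements merged into one kernel-verified Lean document; each statement's English description precedes it below -/
import Mathlib

section
/- For every natural number k and every vertex v, the label L_k(v) produced by the synchronous two-order Contour sequence lies in the connected component of v; that is, L_k(v) is reachable from v in G. -/
variable {V : Type*} [Fintype V] [LinearOrder V] [Nonempty V]

/-- One-step two-order Contour update `U`: `U(L)(w)` is the minimum of the finite
nonempty set `{L(L(w))} ∪ {L(L(v)) : v adjacent to w} ∪
{L(L(v)) : v adjacent to some u with L(u) = w}`. -/
def contourStep (G : SimpleGraph V) [DecidableRel G.Adj] (L : V → V) : V → V :=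
  fun w =>
    (insert (L (L w))
      ((G.neighborFinset w).image (fun v => L (L v)) ∪
        (Finset.univ.filter (fun v => ∃ u, G.Adj v u ∧ L u = w)).image
          (fun v => L (L v)))).min' (Finset.insert_nonempty _ _)

/-- Synchronous two-order Contour labeling sequence: `L_0 = id`, `L_{k+1} = U(L_k)`. -/
def contourSeq (G : SimpleGraph V) [DecidableRel G.Adj] : ℕ → V → V
  | 0 => id
  | (k + 1) => contourStep G (contourSeq G k)

/-- For every `k` and every vertex `v`, the label `L_k(v)` lies in the connected
component of `v`, i.e. `L_k(v)` is reachable from `v` in `G`. -/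
theorem contour_label_reachable (G : SimpleGraph V) [DecidableRel G.Adj] :
    ∀ (k : ℕ) (v : V), G.Reachable v (contourSeq G k v) := by
  intro k
  induction k with
  | zero => intro v; exact SimpleGraph.Reachable.refl _
  | succ k ih =>
    intro w
    have h2 : ∀ v, G.Reachable v (contourSeq G k (contourSeq G k v)) :=
      fun v => (ih v).trans (ih _)
    have hm : contourSeq G (k + 1) w ∈ _ := Finset.min'_mem _ (Finset.insert_nonempty
      (contourSeq G k (contourSeq G k w))
      ((G.neighborFinset w).image (fun v => contourSeq G k (contourSeq G k v)) ∪
        (Finset.univ.filter (fun v => ∃ u, G.Adj v u ∧ contourSeq G k u = w)).image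
          (fun v => contourSeq G k (contourSeq G k v))))
    rw [Finset.mem_insert, Finset.mem_union, Finset.mem_image, Finset.mem_image] at hm
    rcases hm with h | ⟨v, hv, h⟩ | ⟨v, hv, h⟩
    · rw [h]; exact h2 w
    · rw [← h]
      rw [SimpleGraph.mem_neighborFinset] at hv
      exact hv.reachable.trans (h2 v)
    · rw [← h]
      obtain ⟨u, hu, huw⟩ := (Finset.mem_filter.mp hv).2
      have hwu : G.Reachable u w := huw ▸ ih u
      exact (hwu.symm.trans hu.symm.reachable).trans (h2 v)
end

section
/- For every natural number k and every vertex v, the minimum vertex of the connected component of v is a lower bound for L_k(v); moreover, if v itself is the minimum vertex of its connected component, then L_k(v) = v for all k. -/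
variable {V : Type*} [Fintype V] [LinearOrder V] [Nonempty V]

/-- The minimum vertex of the connected component of `v`. -/
noncomputable def compMin (G : SimpleGraph V) (v : V) : V :=
  haveI : DecidablePred (G.Reachable v) := Classical.decPred _
  (Finset.univ.filter (G.Reachable v)).min'
    ⟨v, Finset.mem_filter.mpr ⟨Finset.mem_univ v, SimpleGraph.Reachable.refl v⟩⟩

theorem contourSeq_reachable (G : SimpleGraph V) [DecidableRel G.Adj] (k : ℕ) :
    ∀ v : V, G.Reachable v (contourSeq G k v) := by
  induction k with
  | zero => intro v; exact SimpleGraph.Reachable.refl v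
  | succ k ih =>
    intro w
    have ih2 : ∀ v, G.Reachable v (contourSeq G k (contourSeq G k v)) :=
      fun v => (ih v).trans (ih _)
    have hm : contourSeq G (k + 1) w ∈ _ := Finset.min'_mem _ (Finset.insert_nonempty
      (contourSeq G k (contourSeq G k w))
      ((G.neighborFinset w).image (fun v => contourSeq G k (contourSeq G k v)) ∪
        (Finset.univ.filter (fun v => ∃ u, G.Adj v u ∧ contourSeq G k u = w)).image
          (fun v => contourSeq G k (contourSeq G k v))))
    rw [Finset.mem_insert, Finset.mem_union, Finset.mem_image, Finset.mem_image] at hm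
    rcases hm with h | ⟨v, hv, h⟩ | ⟨v, hv, h⟩
    · rw [h]; exact ih2 w
    · rw [← h]
      rw [SimpleGraph.mem_neighborFinset] at hv
      exact hv.reachable.trans (ih2 v)
    · rw [← h]
      obtain ⟨u, hvu, hu⟩ := (Finset.mem_filter.mp hv).2
      have h1 := ih u
      rw [hu] at h1
      exact h1.symm.trans (hvu.symm.reachable.trans (ih2 v))

theorem compMin_le_of_reachable (G : SimpleGraph V) {v w : V} (h : G.Reachable v w) :
    compMin G v ≤ w := by
  classical
  unfold compMin
  apply Finset.min'_le
  simpa using h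

/-- The minimum vertex of the connected component of `v` is a lower bound for `L_k(v)`;
moreover if `v` is the minimum of its component then `L_k(v) = v` for all `k`. -/
theorem contour_compMin_le (G : SimpleGraph V) [DecidableRel G.Adj] :
    ∀ (k : ℕ) (v : V),
      compMin G v ≤ contourSeq G k v ∧ (compMin G v = v → contourSeq G k v = v) := by
  intro k v
  have hle : ∀ k, compMin G v ≤ contourSeq G k v :=
    fun k => compMin_le_of_reachable G (contourSeq_reachable G k v)
  refine ⟨hle k, fun hv => ?_⟩
  induction k with
  | zero => rfl
  | succ k ih =>
    apply le_antisymm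
    · have h : contourSeq G (k + 1) v ≤ contourSeq G k (contourSeq G k v) :=
        Finset.min'_le _ _ (Finset.mem_insert_self _ _)
      rwa [ih, ih] at h
    · have h := hle (k + 1)
      rwa [hv] at h
end

section
/- Correctness of the early convergence check: if at some iteration k one has L_k(u) = L_k(v) for every edge {u, v} of G, then for every vertex v, L_k(v) equals the minimum vertex of the connected component of v. -/
variable {V : Type*} [Fintype V] [LinearOrder V] [Nonempty V]

theorem contourStep_spec (G : SimpleGraph V) [DecidableRel G.Adj] (L : V → V)
    (hle : ∀ v, L v ≤ v) (hr : ∀ v, G.Reachable v (L v)) :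
    (∀ v, contourStep G L v ≤ v) ∧ (∀ v, G.Reachable v (contourStep G L v)) := by
  constructor
  · intro v
    refine le_trans (Finset.min'_le _ (L (L v)) (Finset.mem_insert_self _ _)) ?_
    exact (hle _).trans (hle _)
  · intro w
    have hrr : ∀ v, G.Reachable v (L (L v)) := fun v => (hr v).trans (hr _)
    have hm : contourStep G L w ∈ _ := Finset.min'_mem _ _
    simp only [Finset.mem_insert, Finset.mem_union, Finset.mem_image,
      SimpleGraph.mem_neighborFinset, Finset.mem_filter, Finset.mem_univ, true_and] at hm
    rcases hm with hm | ⟨v, hv, hm⟩ | ⟨v, ⟨u, hu, rfl⟩, hm⟩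
    · rw [hm]; exact hrr w
    · rw [← hm]; exact hv.reachable.trans (hrr v)
    · rw [← hm]; exact (hr u).symm.trans (hu.symm.reachable.trans (hrr v))

theorem contourSeq_spec (G : SimpleGraph V) [DecidableRel G.Adj] (k : ℕ) :
    (∀ v, contourSeq G k v ≤ v) ∧ (∀ v, G.Reachable v (contourSeq G k v)) := by
  induction k with
  | zero => exact ⟨fun v => le_refl v, fun v => SimpleGraph.Reachable.refl v⟩
  | succ k ih => exact contourStep_spec G _ ih.1 ih.2

theorem compMin_reachable (G : SimpleGraph V) (v : V) : G.Reachable v (compMin G v) := by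
  letI : DecidablePred (G.Reachable v) := Classical.decPred _
  have hm : compMin G v ∈ Finset.univ.filter (G.Reachable v) := Finset.min'_mem _ _
  exact (Finset.mem_filter.mp hm).2

theorem compMin_le (G : SimpleGraph V) (v w : V) (h : G.Reachable v w) : compMin G v ≤ w := by
  letI : DecidablePred (G.Reachable v) := Classical.decPred _
  unfold compMin
  exact Finset.min'_le _ _ (Finset.mem_filter.mpr ⟨Finset.mem_univ w, h⟩)

/-- Correctness of the early convergence check: if at some iteration `k` one has
`L_k(u) = L_k(v)` for every edge `{u, v}` of `G`, then `L_k(v)` equals the minimum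
vertex of the connected component of `v` for every vertex `v`. -/
theorem contour_early_convergence (G : SimpleGraph V) [DecidableRel G.Adj] (k : ℕ)
    (h : ∀ u v : V, G.Adj u v → contourSeq G k u = contourSeq G k v) :
    ∀ v : V, contourSeq G k v = compMin G v := by
  intro v
  have hc : ∀ a b : V, G.Reachable a b → contourSeq G k a = contourSeq G k b := by
    rintro a b ⟨p⟩
    induction p with
    | nil => rfl
    | cons hadj _ ih => exact (h _ _ hadj).trans ih
  obtain ⟨h1, h2⟩ := contourSeq_spec G k
  refine le_antisymm ?_ (compMin_le G v _ (h2 v))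
  rw [hc v _ (compMin_reachable G v)]
  exact h1 _
end

section
/- Ball formula for one-order label propagation: for every natural number k and every vertex v, M_k(v) equals the minimum of the set of vertices u such that there is a walk in G from v to u of length at most k (equivalently, u is in the component of v and the graph distance between u and v is at most k). -/
variable {V : Type*} [Fintype V] [LinearOrder V] [Nonempty V]

/-- One-order label-propagation step: `v ↦ min ({M v} ∪ {M u : u adjacent to v})`. -/
def propStep (G : SimpleGraph V) [DecidableRel G.Adj] (M : V → V) : V → V :=
  fun v => (insert (M v) ((G.neighborFinset v).image M)).min' (Finset.insert_nonempty _ _)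

/-- One-order label-propagation sequence: `M_0 = id`, `M_{k+1}(v) = min {M_k(u) : u = v or u adjacent to v}`. -/
def propSeq (G : SimpleGraph V) [DecidableRel G.Adj] : ℕ → V → V
  | 0 => id
  | (k + 1) => propStep G (propSeq G k)

/-- The minimum vertex over the ball of radius `k` around `v`: the minimum of the set of
vertices `u` joined to `v` by a walk in `G` of length at most `k`. -/
noncomputable def ballMin (G : SimpleGraph V) (k : ℕ) (v : V) : V :=
  haveI : DecidablePred (fun u : V => ∃ p : G.Walk v u, p.length ≤ k) :=
    Classical.decPred _
  (Finset.univ.filter (fun u : V => ∃ p : G.Walk v u, p.length ≤ k)).min'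
    ⟨v, Finset.mem_filter.mpr ⟨Finset.mem_univ v, SimpleGraph.Walk.nil, by simp⟩⟩

theorem propSeq_exists_walk (G : SimpleGraph V) [DecidableRel G.Adj] :
    ∀ (k : ℕ) (v : V), ∃ p : G.Walk v (propSeq G k v), p.length ≤ k := by
  intro k
  induction k with
  | zero => exact fun v => ⟨(SimpleGraph.Walk.nil : G.Walk v v), le_refl _⟩
  | succ k ih =>
    intro v
    have h : propSeq G (k + 1) v ∈
        insert (propSeq G k v) ((G.neighborFinset v).image (propSeq G k)) :=
      Finset.min'_mem _ (Finset.insert_nonempty _ _)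
    rw [Finset.mem_insert, Finset.mem_image] at h
    rcases h with h | ⟨w, hw, h⟩
    · rw [h]
      obtain ⟨p, hp⟩ := ih v
      exact ⟨p, by omega⟩
    · rw [← h]
      obtain ⟨p, hp⟩ := ih w
      exact ⟨SimpleGraph.Walk.cons ((G.mem_neighborFinset v w).1 hw) p, by
        rw [SimpleGraph.Walk.length_cons]; omega⟩

theorem propSeq_le_of_walk (G : SimpleGraph V) [DecidableRel G.Adj] :
    ∀ (k : ℕ) (v u : V) (p : G.Walk v u), p.length ≤ k → propSeq G k v ≤ u := by
  intro k
  induction k with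
  | zero =>
    intro v u p hp
    cases p with
    | nil => exact le_refl _
    | cons h q => simp at hp
  | succ k ih =>
    intro v u p hp
    cases p with
    | nil =>
      exact (Finset.min'_le _ _ (Finset.mem_insert_self _ _)).trans
        (ih v v SimpleGraph.Walk.nil (by simp))
    | @cons _ w _ h q =>
      rw [SimpleGraph.Walk.length_cons] at hp
      exact (Finset.min'_le _ _ (Finset.mem_insert_of_mem
        (Finset.mem_image_of_mem _ ((G.mem_neighborFinset v w).2 h)))).trans
        (ih w u q (by omega))

/-- Ball formula for one-order label propagation: `M_k(v)` equals the minimum of the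
set of vertices `u` reachable from `v` by a walk of length at most `k`. -/
theorem prop_ball_formula (G : SimpleGraph V) [DecidableRel G.Adj] :
    ∀ (k : ℕ) (v : V), propSeq G k v = ballMin G k v := by
  intro k v
  letI : DecidablePred (fun u : V => ∃ p : G.Walk v u, p.length ≤ k) :=
    Classical.decPred _
  unfold ballMin
  apply le_antisymm
  · apply Finset.le_min'
    intro u hu
    rw [Finset.mem_filter] at hu
    obtain ⟨p, hp⟩ := hu.2
    exact propSeq_le_of_walk G k v u p hp
  · apply Finset.min'_le
    rw [Finset.mem_filter]
    exact ⟨Finset.mem_univ _, propSeq_exists_walk G k v⟩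
end

section
/- The two-order Contour operator dominates one-order label propagation: for every natural number k and every vertex v, L_k(v) ≤ M_k(v). -/
variable {V : Type*} [Fintype V] [LinearOrder V] [Nonempty V]

/-- Contour labels never exceed the vertex itself. -/
theorem contourSeq_le_self (G : SimpleGraph V) [DecidableRel G.Adj] :
    ∀ (k : ℕ) (v : V), contourSeq G k v ≤ v := by
  intro k
  induction k with
  | zero => intro v; exact le_refl v
  | succ k ih =>
    intro v
    refine le_trans (Finset.min'_le _ (contourSeq G k (contourSeq G k v)) ?_)
      ((ih _).trans (ih v))
    exact Finset.mem_insert_self _ _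

/-- The two-order Contour operator dominates one-order label propagation:
`L_k(v) ≤ M_k(v)` for every `k` and `v`. -/
theorem contour_le_prop (G : SimpleGraph V) [DecidableRel G.Adj] :
    ∀ (k : ℕ) (v : V), contourSeq G k v ≤ propSeq G k v := by
  intro k
  induction k with
  | zero => intro v; exact le_refl v
  | succ k ih =>
    intro v
    refine Finset.le_min' _ (Finset.insert_nonempty _ _) _ ?_
    intro y hy
    rcases Finset.mem_insert.1 hy with rfl | hy
    · refine le_trans (Finset.min'_le _ (contourSeq G k (contourSeq G k v)) ?_)
        ((contourSeq_le_self G k _).trans (ih v))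
      exact Finset.mem_insert_self _ _
    · obtain ⟨u, hu, rfl⟩ := Finset.mem_image.1 hy
      refine le_trans (Finset.min'_le _ (contourSeq G k (contourSeq G k u)) ?_)
        ((contourSeq_le_self G k _).trans (ih u))
      exact Finset.mem_insert_of_mem (Finset.mem_union_left _
        (Finset.mem_image_of_mem (fun v => contourSeq G k (contourSeq G k v)) hu))
end
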